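/- For all p > 1 and r ≥ 0 there exists a constant c_{p,r} such that whenever X and Y are two nonnegative random variables satisfying x·P(X > x) ≤ E[Y·1{X ≥ x}] for every positive x, one has ‖X‖_{p,r} ≤ c_{p,r} ‖Y‖_{p,r}. -/

import Mathlib

open MeasureTheory ENNReal

noncomputable section

/-- The Young function `φ_{p,r}(x) = x^p (1 + log(1+x))^r`. -/
def phiYoung (p r x : ℝ) : ℝ := x ^ p * (1 + Real.log (1 + x)) ^ r

/-- The Luxemburg (Orlicz) norm associated with `φ_{p,r}`. -/
def orliczNorm {Ω : Type*} [MeasurableSpace Ω] (μ : Measure Ω) (p r : ℝ) (X : Ω → ℝ) : ℝ≥0∞ :=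
  sInf {l : ℝ≥0∞ | 0 < l ∧ l < ⊤ ∧
    ∫⁻ ω, ENNReal.ofReal (phiYoung p r (|X ω| / l.toReal)) ∂μ ≤ 1}

lemma one_le_one_add_log_one_add {x : ℝ} (hx : 0 ≤ x) : 1 ≤ 1 + Real.log (1 + x) := by
  linarith [Real.log_nonneg (show (1 : ℝ) ≤ 1 + x by linarith)]

lemma phiYoung_nonneg (p r : ℝ) {x : ℝ} (hx : 0 ≤ x) : 0 ≤ phiYoung p r x := by
  have := one_le_one_add_log_one_add hx
  unfold phiYoung
  positivity

lemma log_rpow_le_log_rpow {r x y : ℝ} (hr : 0 ≤ r) (hx : 0 ≤ x) (hxy : x ≤ y) :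
    (1 + Real.log (1 + x)) ^ r ≤ (1 + Real.log (1 + y)) ^ r := by
  have h1 := one_le_one_add_log_one_add hx
  have h2 : Real.log (1 + x) ≤ Real.log (1 + y) := Real.log_le_log (by linarith) (by linarith)
  exact Real.rpow_le_rpow (by linarith) (by linarith) hr

lemma phiYoung_mono {p r x y : ℝ} (hp : 0 ≤ p) (hr : 0 ≤ r) (hx : 0 ≤ x) (hxy : x ≤ y) :
    phiYoung p r x ≤ phiYoung p r y := by
  have h1 := one_le_one_add_log_one_add hx
  exact mul_le_mul (Real.rpow_le_rpow hx hxy hp) (log_rpow_le_log_rpow hr hx hxy)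
    (by positivity) (Real.rpow_nonneg (hx.trans hxy) p)

/-- The doubling (`Δ₂`) condition. -/
lemma phiYoung_two_mul_le {p r x : ℝ} (hr : 0 ≤ r) (hx : 0 ≤ x) :
    phiYoung p r (2 * x) ≤ 2 ^ (p + r) * phiYoung p r x := by
  have h1 := one_le_one_add_log_one_add hx
  have h3 : 1 + Real.log (1 + 2 * x) ≤ 2 * (1 + Real.log (1 + x)) := by
    have : Real.log (1 + 2 * x) ≤ Real.log ((1 + x) ^ 2) :=
      Real.log_le_log (by linarith) (by nlinarith [sq_nonneg x])
    rw [Real.log_pow] at this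
    push_cast at this
    linarith
  have h4 : (1 + Real.log (1 + 2 * x)) ^ r ≤ 2 ^ r * (1 + Real.log (1 + x)) ^ r := by
    rw [← Real.mul_rpow (by norm_num) (by linarith)]
    have := one_le_one_add_log_one_add (show 0 ≤ 2 * x by linarith)
    exact Real.rpow_le_rpow (by linarith) h3 hr
  unfold phiYoung
  rw [Real.mul_rpow (by norm_num) hx, Real.rpow_add (by norm_num)]
  calc 2 ^ p * x ^ p * (1 + Real.log (1 + 2 * x)) ^ r
      ≤ 2 ^ p * x ^ p * (2 ^ r * (1 + Real.log (1 + x)) ^ r) := by gcongr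
    _ = _ := by ring

lemma phiYoung_div_le {p r x c : ℝ} (hp : 1 ≤ p) (hr : 0 ≤ r) (hx : 0 ≤ x) (hc : 1 ≤ c) :
    phiYoung p r (x / c) ≤ phiYoung p r x / c := by
  have hc0 : 0 < c := by linarith
  have h0 : 0 ≤ x / c := by positivity
  have h1 := one_le_one_add_log_one_add h0
  have h2 : (x / c) ^ p ≤ x ^ p / c := by
    rw [Real.div_rpow hx hc0.le]
    gcongr
    simpa using Real.rpow_le_rpow_of_exponent_le hc hp
  calc phiYoung p r (x / c)
      ≤ x ^ p / c * (1 + Real.log (1 + x)) ^ r :=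
        mul_le_mul h2 (log_rpow_le_log_rpow hr h0 (div_le_self hx hc)) (by positivity)
          (by positivity)
    _ = phiYoung p r x / c := by unfold phiYoung; ring

@[fun_prop]
lemma measurable_phiYoung (p r : ℝ) : Measurable (phiYoung p r) := by
  unfold phiYoung
  fun_prop

lemma ofReal_phiYoung_le_lintegral {p r x : ℝ} (hp : 1 < p) (hr : 0 ≤ r) (hx : 0 ≤ x) :
    ENNReal.ofReal (phiYoung p r x) ≤ ENNReal.ofReal (2 * 2 ^ (p + r)) *
      ∫⁻ t in Set.Ioo 0 x, ENNReal.ofReal (phiYoung p r t / t) := by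
  rcases hx.eq_or_lt with rfl | hx0
  · simp [phiYoung, Real.zero_rpow (show p ≠ 0 by linarith)]
  have hhalf : ENNReal.ofReal (phiYoung p r (x / 2) / x) * ENNReal.ofReal (x / 2) ≤
      ∫⁻ t in Set.Ioo 0 x, ENNReal.ofReal (phiYoung p r t / t) := by
    calc ENNReal.ofReal (phiYoung p r (x / 2) / x) * ENNReal.ofReal (x / 2)
        = ∫⁻ _ in Set.Ioo (x / 2) x, ENNReal.ofReal (phiYoung p r (x / 2) / x) := by
          rw [setLIntegral_const, Real.volume_Ioo, show x - x / 2 = x / 2 by ring]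
      _ ≤ ∫⁻ t in Set.Ioo (x / 2) x, ENNReal.ofReal (phiYoung p r t / t) := by
          refine setLIntegral_mono' measurableSet_Ioo fun t ht => ENNReal.ofReal_le_ofReal ?_
          have ht0 : 0 < t := by linarith [ht.1]
          exact div_le_div₀ (phiYoung_nonneg p r ht0.le)
            (phiYoung_mono (by linarith) hr (by linarith) ht.1.le) ht0 ht.2.le
      _ ≤ _ := lintegral_mono_set (Set.Ioo_subset_Ioo_left (by linarith))
  refine le_trans ?_ (mul_le_mul_right hhalf _)
  have hn := phiYoung_nonneg p r (half_pos hx0).le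
  rw [← ENNReal.ofReal_mul (by positivity), ← ENNReal.ofReal_mul (by positivity)]
  refine ENNReal.ofReal_le_ofReal ?_
  have := phiYoung_two_mul_le (p := p) hr (half_pos hx0).le
  rw [mul_div_cancel₀ x two_ne_zero] at this
  convert this using 1
  field_simp

lemma lintegral_Ioo_rpow {s a : ℝ} (hs : -1 < s) (ha : 0 ≤ a) :
    ∫⁻ t in Set.Ioo 0 a, ENNReal.ofReal (t ^ s) = ENNReal.ofReal (a ^ (s + 1) / (s + 1)) := by
  have hi : IntegrableOn (fun t : ℝ => t ^ s) (Set.Ioc 0 a) :=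
    (intervalIntegrable_iff_integrableOn_Ioc_of_le ha).1
      (intervalIntegral.intervalIntegrable_rpow' hs)
  rw [setLIntegral_congr Ioo_ae_eq_Ioc, ← ofReal_integral_eq_lintegral_ofReal hi,
    ← intervalIntegral.integral_of_le ha, integral_rpow (Or.inl hs),
    Real.zero_rpow (by linarith), sub_zero]
  exact (ae_restrict_iff' measurableSet_Ioc).2 (.of_forall fun t ht => Real.rpow_nonneg ht.1.le s)

lemma ofReal_mul_lintegral_phiYoung_le {p r y : ℝ} (hp : 1 < p) (hr : 0 ≤ r) (hy : 0 ≤ y) :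
    ENNReal.ofReal y * ∫⁻ t in Set.Ioo 0 (2 * y), ENNReal.ofReal (phiYoung p r t / t ^ 2) ≤
      ENNReal.ofReal (2 ^ (p + r) / (2 * (p - 1))) * ENNReal.ofReal (phiYoung p r y) := by
  rcases hy.eq_or_lt with rfl | hy0
  · simp
  have hp1 : 0 < p - 1 := by linarith
  have hL := one_le_one_add_log_one_add (show 0 ≤ 2 * y by linarith)
  have hle : ∫⁻ t in Set.Ioo 0 (2 * y), ENNReal.ofReal (phiYoung p r t / t ^ 2) ≤
      ENNReal.ofReal ((1 + Real.log (1 + 2 * y)) ^ r) *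
        ENNReal.ofReal ((2 * y) ^ (p - 1) / (p - 1)) := by
    calc ∫⁻ t in Set.Ioo 0 (2 * y), ENNReal.ofReal (phiYoung p r t / t ^ 2)
        ≤ ∫⁻ t in Set.Ioo 0 (2 * y), ENNReal.ofReal ((1 + Real.log (1 + 2 * y)) ^ r) *
            ENNReal.ofReal (t ^ (p - 2)) := by
          refine setLIntegral_mono' measurableSet_Ioo fun t ht => ?_
          rw [← ENNReal.ofReal_mul (by positivity)]
          refine ENNReal.ofReal_le_ofReal ?_
          rw [phiYoung, mul_comm, mul_div_assoc, Real.rpow_sub ht.1, Real.rpow_two]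
          have := ht.1
          exact mul_le_mul_of_nonneg_right (log_rpow_le_log_rpow hr ht.1.le ht.2.le)
            (by positivity)
      _ = _ := by
          rw [lintegral_const_mul _ (by fun_prop), lintegral_Ioo_rpow (by linarith) (by linarith)]
          ring_nf
  refine (mul_le_mul_right hle _).trans ?_
  have hn := phiYoung_nonneg p r hy
  rw [← ENNReal.ofReal_mul (by positivity), ← ENNReal.ofReal_mul (by positivity),
    ← ENNReal.ofReal_mul (by positivity)]
  refine ENNReal.ofReal_le_ofReal ?_
  have hpow : (2 * y) ^ p = (2 * y) ^ (p - 1) * (2 * y) := by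
    rw [← Real.rpow_add_one (by positivity), sub_add_cancel]
  calc y * ((1 + Real.log (1 + 2 * y)) ^ r * ((2 * y) ^ (p - 1) / (p - 1)))
      = phiYoung p r (2 * y) / (2 * (p - 1)) := by
        rw [phiYoung, hpow]
        field_simp
    _ ≤ 2 ^ (p + r) * phiYoung p r y / (2 * (p - 1)) := by
        gcongr
        exact phiYoung_two_mul_le hr hy
    _ = _ := by ring

section Probability

variable {Ω : Type*} [MeasurableSpace Ω] {μ : Measure Ω}

/-- A weighted layer-cake formula. -/
lemma lintegral_mul_lintegral_Ioo [SFinite μ] {f : ℝ → ℝ≥0∞} {g : Ω → ℝ≥0∞} {Z : Ω → ℝ}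
    (hf : Measurable f) (hg : Measurable g) (hZ : Measurable Z) :
    ∫⁻ ω, g ω * (∫⁻ t in Set.Ioo 0 (Z ω), f t) ∂μ =
      ∫⁻ t in Set.Ioi 0, f t * ∫⁻ ω in {ω | t < Z ω}, g ω ∂μ := by
  have hS : MeasurableSet {q : Ω × ℝ | q.2 < Z q.1} :=
    measurableSet_lt measurable_snd (hZ.comp measurable_fst)
  have hF : Measurable ({q : Ω × ℝ | q.2 < Z q.1}.indicator fun q => g q.1 * f q.2) :=
    ((hg.comp measurable_fst).mul (hf.comp measurable_snd)).indicator hS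
  calc ∫⁻ ω, g ω * (∫⁻ t in Set.Ioo 0 (Z ω), f t) ∂μ
      = ∫⁻ ω, (∫⁻ t in Set.Ioi 0,
          {q : Ω × ℝ | q.2 < Z q.1}.indicator (fun q => g q.1 * f q.2) (ω, t)) ∂μ := by
        refine lintegral_congr fun ω => ?_
        rw [← lintegral_const_mul _ hf, ← Set.Ioi_inter_Iio, Set.inter_comm,
          ← Measure.restrict_restrict measurableSet_Iio, ← lintegral_indicator measurableSet_Iio]
        rfl
    _ = ∫⁻ t in Set.Ioi 0, ∫⁻ ω,
          {q : Ω × ℝ | q.2 < Z q.1}.indicator (fun q => g q.1 * f q.2) (ω, t) ∂μ :=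
        lintegral_lintegral_swap hF.aemeasurable
    _ = _ := by
        refine lintegral_congr fun t => ?_
        rw [← lintegral_const_mul _ hg,
          ← lintegral_indicator (measurableSet_lt measurable_const hZ)]
        refine lintegral_congr fun ω => ?_
        simp only [Set.indicator, Set.mem_ofPred_eq, mul_comm]

/-- Splitting `Y` at height `x / 2` turns the weak-type bound into one by the tail of `Y`. -/
lemma half_mul_measure_le [IsFiniteMeasure μ] {X Y : Ω → ℝ} (hY : Measurable Y) {x : ℝ}
    (hx : 0 < x) (hXx : μ {ω | x ≤ X ω} = μ {ω | x < X ω})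
    (h : ENNReal.ofReal x * μ {ω | x < X ω} ≤
      ∫⁻ ω in {ω | x ≤ X ω}, ENNReal.ofReal (Y ω) ∂μ) :
    ENNReal.ofReal (x / 2) * μ {ω | x < X ω} ≤
      ∫⁻ ω in {ω | x < 2 * Y ω}, ENNReal.ofReal (Y ω) ∂μ := by
  have hmeas : MeasurableSet {ω | x < 2 * Y ω} := measurableSet_lt measurable_const (hY.const_mul 2)
  have hsplit : ∫⁻ ω in {ω | x ≤ X ω}, ENNReal.ofReal (Y ω) ∂μ ≤
      (∫⁻ ω in {ω | x < 2 * Y ω}, ENNReal.ofReal (Y ω) ∂μ) +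
        ENNReal.ofReal (x / 2) * μ {ω | x < X ω} := by
    calc ∫⁻ ω in {ω | x ≤ X ω}, ENNReal.ofReal (Y ω) ∂μ
        ≤ ∫⁻ ω in {ω | x ≤ X ω}, ({ω | x < 2 * Y ω}.indicator
            (fun ω => ENNReal.ofReal (Y ω)) ω + ENNReal.ofReal (x / 2)) ∂μ := by
          refine lintegral_mono fun ω => ?_
          by_cases hω : x < 2 * Y ω
          · simp [Set.indicator, hω]
          · simp only [Set.indicator, Set.mem_ofPred_eq, hω, if_false, zero_add]
            exact ENNReal.ofReal_le_ofReal (by linarith)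
      _ = (∫⁻ ω in {ω | x ≤ X ω}, {ω | x < 2 * Y ω}.indicator
            (fun ω => ENNReal.ofReal (Y ω)) ω ∂μ) + ENNReal.ofReal (x / 2) * μ {ω | x < X ω} := by
          rw [lintegral_add_right _ measurable_const, setLIntegral_const, hXx]
      _ ≤ _ := by
          rw [← lintegral_indicator hmeas]
          exact add_le_add_left (setLIntegral_le_lintegral _ _) _
  have hdouble : ENNReal.ofReal x * μ {ω | x < X ω} =
      ENNReal.ofReal (x / 2) * μ {ω | x < X ω} + ENNReal.ofReal (x / 2) * μ {ω | x < X ω} := by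
    rw [← add_mul, ← ENNReal.ofReal_add (by positivity) (by positivity), add_halves]
  rw [hdouble] at h
  exact (ENNReal.add_le_add_iff_right
    (ENNReal.mul_ne_top ENNReal.ofReal_ne_top (measure_ne_top _ _))).1 (h.trans hsplit)

lemma lintegral_phiYoung_le_of_weak_type [IsFiniteMeasure μ] {p r : ℝ} (hp : 1 < p) (hr : 0 ≤ r)
    {X Y : Ω → ℝ} (hX : Measurable X) (hY : Measurable Y) (hX0 : ∀ ω, 0 ≤ X ω)
    (hY0 : ∀ ω, 0 ≤ Y ω)
    (h : ∀ x : ℝ, 0 < x → ENNReal.ofReal x * μ {ω | x < X ω} ≤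
      ∫⁻ ω in {ω | x ≤ X ω}, ENNReal.ofReal (Y ω) ∂μ) :
    ∫⁻ ω, ENNReal.ofReal (phiYoung p r (X ω)) ∂μ ≤
      ENNReal.ofReal (2 * 2 ^ (p + r) * (2 * (2 ^ (p + r) / (2 * (p - 1))))) *
        ∫⁻ ω, ENNReal.ofReal (phiYoung p r (Y ω)) ∂μ := by
  have hp1 : 0 < p - 1 := by linarith
  have hmeas : Measurable fun t : ℝ => ENNReal.ofReal (phiYoung p r t / t) := by fun_prop
  have hmeas2 : Measurable fun t : ℝ => ENNReal.ofReal (phiYoung p r t / t ^ 2) := by fun_prop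
  have hX' : ∫⁻ ω, ENNReal.ofReal (phiYoung p r (X ω)) ∂μ ≤ ENNReal.ofReal (2 * 2 ^ (p + r)) *
      ∫⁻ t in Set.Ioi 0, ENNReal.ofReal (phiYoung p r t / t) * μ {ω | t < X ω} := by
    have hcake := lintegral_mul_lintegral_Ioo (μ := μ) (g := 1) hmeas measurable_one hX
    simp only [Pi.one_apply, one_mul, setLIntegral_one] at hcake
    rw [← hcake, ← lintegral_const_mul' _ _ ENNReal.ofReal_ne_top]
    exact lintegral_mono fun ω => ofReal_phiYoung_le_lintegral hp hr (hX0 ω)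
  have hmid : ∫⁻ t in Set.Ioi 0, ENNReal.ofReal (phiYoung p r t / t) * μ {ω | t < X ω} ≤
      ENNReal.ofReal 2 * ∫⁻ t in Set.Ioi 0, ENNReal.ofReal (phiYoung p r t / t ^ 2) *
        ∫⁻ ω in {ω | t < 2 * Y ω}, ENNReal.ofReal (Y ω) ∂μ := by
    rw [← lintegral_const_mul' _ _ ENNReal.ofReal_ne_top]
    refine lintegral_mono_ae ?_
    filter_upwards [ae_restrict_mem measurableSet_Ioi,
      ae_restrict_of_ae (meas_le_ae_eq_meas_lt μ volume X)] with t ht hXt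
    have ht0 : 0 < t := ht
    have hn := phiYoung_nonneg p r ht0.le
    calc ENNReal.ofReal (phiYoung p r t / t) * μ {ω | t < X ω}
        = ENNReal.ofReal 2 * (ENNReal.ofReal (phiYoung p r t / t ^ 2) *
            (ENNReal.ofReal (t / 2) * μ {ω | t < X ω})) := by
          rw [← mul_assoc, ← mul_assoc, ← ENNReal.ofReal_mul (by norm_num),
            ← ENNReal.ofReal_mul (by positivity)]
          congr 2
          field_simp
      _ ≤ _ := by
          gcongr
          exact half_mul_measure_le hY ht0 hXt (h t ht0)
  have hY' : ∫⁻ t in Set.Ioi 0, ENNReal.ofReal (phiYoung p r t / t ^ 2) *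
        ∫⁻ ω in {ω | t < 2 * Y ω}, ENNReal.ofReal (Y ω) ∂μ ≤
      ENNReal.ofReal (2 ^ (p + r) / (2 * (p - 1))) *
        ∫⁻ ω, ENNReal.ofReal (phiYoung p r (Y ω)) ∂μ := by
    rw [← lintegral_mul_lintegral_Ioo hmeas2 hY.ennreal_ofReal (hY.const_mul 2),
      ← lintegral_const_mul' _ _ ENNReal.ofReal_ne_top]
    exact lintegral_mono fun ω => ofReal_mul_lintegral_phiYoung_le hp hr (hY0 ω)
  rw [ENNReal.ofReal_mul (by positivity), ENNReal.ofReal_mul (p := 2) (q := _ / _) (by norm_num),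
    mul_assoc, mul_assoc]
  exact hX'.trans (mul_le_mul_right (hmid.trans (mul_le_mul_right hY' _)) _)

/-- The weak-type hypothesis is invariant under scaling both variables. -/
lemma weak_type_div {X Y : Ω → ℝ} {l : ℝ} (hl : 0 < l)
    (h : ∀ x : ℝ, 0 < x → ENNReal.ofReal x * μ {ω | x < X ω} ≤
      ∫⁻ ω in {ω | x ≤ X ω}, ENNReal.ofReal (Y ω) ∂μ) (x : ℝ) (hx : 0 < x) :
    ENNReal.ofReal x * μ {ω | x < X ω / l} ≤
      ∫⁻ ω in {ω | x ≤ X ω / l}, ENNReal.ofReal (Y ω / l) ∂μ := by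
  have hxl := h (x * l) (by positivity)
  have hdiv : ∀ ω, ENNReal.ofReal (Y ω / l) = ENNReal.ofReal l⁻¹ * ENNReal.ofReal (Y ω) := by
    intro ω
    rw [← ENNReal.ofReal_mul (by positivity), div_eq_inv_mul]
  simp only [lt_div_iff₀ hl, le_div_iff₀ hl, hdiv]
  rw [lintegral_const_mul' _ _ ENNReal.ofReal_ne_top]
  refine le_trans (le_of_eq ?_) (mul_le_mul_right hxl _)
  rw [← mul_assoc, ← ENNReal.ofReal_mul (by positivity)]
  congr 2
  field_simp

end Probability

/-- From a weak-type inequality to a comparison of Orlicz norms: if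
`x P(X > x) ≤ E[Y 1_{X ≥ x}]` for all `x > 0`, then `‖X‖_{p,r} ≤ c_{p,r} ‖Y‖_{p,r}`. -/
theorem orlicz_norm_of_weak_type (p r : ℝ) (hp : 1 < p) (hr : 0 ≤ r) :
    ∃ c : ℝ≥0∞, c ≠ ⊤ ∧
      ∀ (Ω : Type*) (mΩ : MeasurableSpace Ω) (μ : Measure Ω),
        IsProbabilityMeasure μ →
        ∀ X Y : Ω → ℝ, Measurable X → Measurable Y →
        (∀ ω, 0 ≤ X ω) → (∀ ω, 0 ≤ Y ω) →
        (∀ x : ℝ, 0 < x →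
          ENNReal.ofReal x * μ {ω | x < X ω} ≤
            ∫⁻ ω in {ω | x ≤ X ω}, ENNReal.ofReal (Y ω) ∂μ) →
        orliczNorm μ p r X ≤ c * orliczNorm μ p r Y := by
  set C : ℝ := max 1 (2 * 2 ^ (p + r) * (2 * (2 ^ (p + r) / (2 * (p - 1)))))
  have hC1 : 1 ≤ C := le_max_left _ _
  have hC0 : 0 < C := by linarith
  refine ⟨ENNReal.ofReal C, ENNReal.ofReal_ne_top, ?_⟩
  intro Ω mΩ μ hμ X Y hX hY hX0 hY0 h
  rw [mul_comm, ← ENNReal.div_le_iff (ENNReal.ofReal_pos.2 hC0).ne' ENNReal.ofReal_ne_top]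
  refine le_sInf fun l ⟨hl0, hl_top, hl⟩ => ?_
  rw [ENNReal.div_le_iff (ENNReal.ofReal_pos.2 hC0).ne' ENNReal.ofReal_ne_top]
  refine sInf_le ⟨ENNReal.mul_pos hl0.ne' (ENNReal.ofReal_pos.2 hC0).ne',
    ENNReal.mul_lt_top hl_top ENNReal.ofReal_lt_top, ?_⟩
  have hlr : 0 < l.toReal := ENNReal.toReal_pos hl0.ne' hl_top.ne
  have hmain := lintegral_phiYoung_le_of_weak_type hp hr (hX.div_const l.toReal)
    (hY.div_const l.toReal) (fun ω => div_nonneg (hX0 ω) hlr.le)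
    (fun ω => div_nonneg (hY0 ω) hlr.le) (weak_type_div hlr h)
  simp only [abs_of_nonneg (hY0 _)] at hl
  calc ∫⁻ ω, ENNReal.ofReal (phiYoung p r (|X ω| / (l * ENNReal.ofReal C).toReal)) ∂μ
      ≤ ∫⁻ ω, ENNReal.ofReal C⁻¹ * ENNReal.ofReal (phiYoung p r (X ω / l.toReal)) ∂μ := by
        refine lintegral_mono fun ω => ?_
        rw [← ENNReal.ofReal_mul (by positivity), ENNReal.toReal_mul,
          ENNReal.toReal_ofReal hC0.le, abs_of_nonneg (hX0 ω), ← div_div, ← div_eq_inv_mul]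
        exact ENNReal.ofReal_le_ofReal
          (phiYoung_div_le hp.le hr (div_nonneg (hX0 ω) hlr.le) hC1)
    _ = ENNReal.ofReal C⁻¹ * ∫⁻ ω, ENNReal.ofReal (phiYoung p r (X ω / l.toReal)) ∂μ :=
        lintegral_const_mul' _ _ ENNReal.ofReal_ne_top
    _ ≤ ENNReal.ofReal C⁻¹ * (ENNReal.ofReal C * 1) := by
        gcongr
        exact hmain.trans (mul_le_mul' (ENNReal.ofReal_le_ofReal (le_max_right _ _)) hl)
    _ = 1 := by
        rw [mul_one, ← ENNReal.ofReal_mul (by positivity), inv_mul_cancel₀ hC0.ne',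
          ENNReal.ofReal_one]
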